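/- Exhaustive application of the unit and conflict rules is symmetry-lifting: if F* is obtained from a CNF formula F by exhaustively applying the unit rule and the conflict rule, then every semantic symmetry of F*, extended by the identity on Lit(F) ∖ Lit(F*), is a semantic symmetry of F, i.e., Aut_sem(F*)↑^{Lit(F)} ⊆ Aut_sem(F). -/

import Mathlib

/-- A literal over a variable type `V`: a variable or its negation. -/
inductive Lit (V : Type) where
  | pos : V → Lit V
  | neg : V → Lit V
deriving DecidableEq

variable {V : Type} [DecidableEq V]

/-- Negation of a literal (so that double negation is the identity). -/
def Lit.negate : Lit V → Lit V
  | .pos v => .neg v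
  | .neg v => .pos v

/-- The underlying variable of a literal. -/
def Lit.var : Lit V → V
  | .pos v => v
  | .neg v => v

/-- A clause is a finite set of literals. -/
abbrev Clause (V : Type) := Finset (Lit V)

/-- A CNF formula is a finite set of clauses. -/
abbrev CNF (V : Type) := Finset (Clause V)

/-- `Var(F)`: the variables occurring in a formula. -/
def CNF.vars (F : CNF V) : Finset V := Finset.sup F (fun C => Finset.image Lit.var C)

/-- `Lit(F) = Var(F) ∪ {v̄ : v ∈ Var(F)}`. -/
def CNF.lits (F : CNF V) : Finset (Lit V) :=
  Finset.image Lit.pos (CNF.vars F) ∪ Finset.image Lit.neg (CNF.vars F)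

/-- The value of a literal under a complete assignment (given on the variables,
which determines a consistent complete assignment on all literals). -/
def Lit.val (σ : V → Bool) : Lit V → Bool
  | .pos v => σ v
  | .neg v => !(σ v)

/-- `C[σ]`: delete from `C` every literal mapped to `⊥` by `σ`
(i.e. keep `l` with `¬l ∉ σ`). -/
def Clause.reduce (σ : V → Bool) (C : Clause V) : Clause V :=
  Finset.filter (fun l => Lit.val σ (Lit.negate l) = false) C

/-- `F[σ]`: delete every clause containing a literal mapped to `⊤` by `σ`
(for a complete assignment: every clause containing no false literal is kept)
and delete from each remaining clause every literal mapped to `⊥`. -/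
def CNF.reduce (F : CNF V) (σ : V → Bool) : CNF V :=
  Finset.image (Clause.reduce σ) (Finset.filter (fun C => ∀ l ∈ C, Lit.val σ l = false) F)

/-- Apply a map on literals elementwise to clauses and formulas. -/
def CNF.map (φ : Lit V → Lit V) (F : CNF V) : CNF V :=
  Finset.image (fun C => Finset.image φ C) F

/-- `φ` is a syntactic symmetry of `F`: a bijection of `Lit(F)` respecting
negation with `φ(F) = F`. -/
def IsSynSym (F : CNF V) (φ : Lit V → Lit V) : Prop :=
  Set.BijOn φ (CNF.lits F : Set (Lit V)) (CNF.lits F : Set (Lit V)) ∧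
  (∀ l ∈ CNF.lits F, φ (Lit.negate l) = Lit.negate (φ l)) ∧
  CNF.map φ F = F

/-- `φ` is a semantic symmetry of `F`: a bijection of `Lit(F)` respecting
negation with `F[σ] = φ(F)[σ]` for every complete assignment `σ`. -/
def IsSemSym (F : CNF V) (φ : Lit V → Lit V) : Prop :=
  Set.BijOn φ (CNF.lits F : Set (Lit V)) (CNF.lits F : Set (Lit V)) ∧
  (∀ l ∈ CNF.lits F, φ (Lit.negate l) = Lit.negate (φ l)) ∧
  ∀ σ : V → Bool, CNF.reduce F σ = CNF.reduce (CNF.map φ F) σ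

/-- Extend a map defined on the literal set `S` by the identity outside `S`. -/
def extendId (S : Finset (Lit V)) (φ : Lit V → Lit V) : Lit V → Lit V :=
  fun l => if l ∈ S then φ l else l

/-- `F[l ↦ ⊤]`: delete every clause containing `l` and delete `l̄` from every
remaining clause. -/
def CNF.assignTrue (F : CNF V) (l : Lit V) : CNF V :=
  Finset.image (fun C => Finset.erase C (Lit.negate l)) (Finset.filter (fun C => l ∉ C) F)

/-- One (proper) application of the unit rule (`{l} ∈ F` is replaced by
`F[l ↦ ⊤]`) or the conflict rule (`∅ ∈ F` reduces `F` to `{∅}`). -/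
def UCStep (F F' : CNF V) : Prop :=
  F' ≠ F ∧
    ((∃ l : Lit V, ({l} : Clause V) ∈ F ∧ F' = CNF.assignTrue F l) ∨
      ((∅ : Clause V) ∈ F ∧ F' = {(∅ : Clause V)}))

/-!
Under a complete assignment `σ` the formula `F[σ]` is `∅` if `σ` satisfies `F` and `{∅}` otherwise,
so a negation-preserving bijection `φ` of `Lit(F)` is a semantic symmetry exactly when `σ` and
`σ ∘ φ` satisfy `F` simultaneously. If `{l} ∈ F`, then satisfying `F` amounts to satisfying both `l`
and `F[l ↦ ⊤]`; neither `l` nor its negation occurs in `F[l ↦ ⊤]`, so the extension of a symmetry of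
`F[l ↦ ⊤]` fixes both and is a symmetry of `F`. If `∅ ∈ F`, no assignment satisfies `F`. Lifting
symmetries is reflexive and transitive, hence it passes from single steps to sequences of steps.
-/

section LiteralsAndClauses

omit [DecidableEq V]

theorem Lit.val_negate (σ : V → Bool) (l : Lit V) : l.negate.val σ = !l.val σ := by
  cases l <;> simp [Lit.val, Lit.negate]

theorem Lit.var_negate (l : Lit V) : l.negate.var = l.var := by
  cases l <;> rfl

theorem Lit.eq_or_eq_negate_of_var_eq {l m : Lit V} (h : m.var = l.var) :
    m = l ∨ m = l.negate := by
  cases l <;> cases m <;> simp_all [Lit.var, Lit.negate]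

theorem Clause.reduce_eq_empty {σ : V → Bool} {C : Clause V}
    (hC : ∀ l ∈ C, l.val σ = false) : C.reduce σ = ∅ :=
  Finset.filter_eq_empty_iff.2 fun l hl => by simp [Lit.val_negate, hC l hl]

end LiteralsAndClauses

namespace CNF

theorem mem_lits {F : CNF V} {l : Lit V} : l ∈ F.lits ↔ ∃ C ∈ F, ∃ m ∈ C, m.var = l.var := by
  cases l <;> simp [lits, vars, Finset.mem_sup, Lit.var]

theorem mem_lits_of_mem {F : CNF V} {C : Clause V} {l : Lit V} (hC : C ∈ F) (hl : l ∈ C) :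
    l ∈ F.lits :=
  mem_lits.2 ⟨C, hC, l, hl, rfl⟩

theorem negate_mem_lits {F : CNF V} {l : Lit V} : l.negate ∈ F.lits ↔ l ∈ F.lits := by
  simp only [mem_lits, Lit.var_negate]

theorem lits_singleton_empty : lits ({∅} : CNF V) = ∅ := by
  refine Finset.eq_empty_of_forall_notMem fun l hl => ?_
  simp [mem_lits] at hl

theorem mem_assignTrue {F : CNF V} {l : Lit V} {D : Clause V} :
    D ∈ F.assignTrue l ↔ ∃ C ∈ F, l ∉ C ∧ C.erase l.negate = D := by
  simp only [assignTrue, Finset.mem_image, Finset.mem_filter, and_assoc]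

theorem lits_assignTrue_subset (F : CNF V) (l : Lit V) : (F.assignTrue l).lits ⊆ F.lits := by
  intro x hx
  obtain ⟨D, hD, m, hm, hvar⟩ := mem_lits.1 hx
  obtain ⟨C, hC, -, rfl⟩ := mem_assignTrue.1 hD
  exact mem_lits.2 ⟨C, hC, m, Finset.mem_of_mem_erase hm, hvar⟩

theorem notMem_lits_assignTrue (F : CNF V) (l : Lit V) : l ∉ (F.assignTrue l).lits := by
  intro hl
  obtain ⟨D, hD, m, hm, hvar⟩ := mem_lits.1 hl
  obtain ⟨C, -, hlC, rfl⟩ := mem_assignTrue.1 hD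
  rcases Lit.eq_or_eq_negate_of_var_eq hvar with rfl | rfl
  · exact hlC (Finset.mem_of_mem_erase hm)
  · exact Finset.notMem_erase _ _ hm

/-- Satisfaction of a formula by a truth valuation of the literals: every clause contains a true
literal. The valuation need not respect negation, so that `Lit.val σ ∘ φ` is allowed for an
arbitrary map `φ` on literals. -/
def SatisfiedBy (F : CNF V) (w : Lit V → Bool) : Prop :=
  ∀ C ∈ F, ∃ l ∈ C, w l = true

omit [DecidableEq V] in
theorem not_satisfiedBy_of_empty_mem {F : CNF V} (hF : ∅ ∈ F) (w : Lit V → Bool) :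
    ¬ F.SatisfiedBy w := by
  intro h
  simpa using h ∅ hF

theorem satisfiedBy_congr {F : CNF V} {w w' : Lit V → Bool} (h : ∀ l ∈ F.lits, w l = w' l) :
    F.SatisfiedBy w ↔ F.SatisfiedBy w' :=
  forall₂_congr fun _ hC => exists_congr fun l => and_congr_right fun hl => by
    rw [h l (mem_lits_of_mem hC hl)]

theorem satisfiedBy_map {F : CNF V} {φ : Lit V → Lit V} {w : Lit V → Bool} :
    (F.map φ).SatisfiedBy w ↔ F.SatisfiedBy (w ∘ φ) := by
  simp [SatisfiedBy, map]

theorem satisfiedBy_iff_of_singleton_mem {F : CNF V} {l : Lit V} {w : Lit V → Bool}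
    (hl : {l} ∈ F) (hw : w l.negate = !w l) :
    F.SatisfiedBy w ↔ w l = true ∧ (F.assignTrue l).SatisfiedBy w := by
  constructor
  · intro hF
    have hwl : w l = true := by simpa using hF {l} hl
    refine ⟨hwl, fun D hD => ?_⟩
    obtain ⟨C, hC, -, rfl⟩ := mem_assignTrue.1 hD
    obtain ⟨m, hm, hwm⟩ := hF C hC
    have hne : m ≠ l.negate := by
      rintro rfl
      simp [hw, hwl] at hwm
    exact ⟨m, Finset.mem_erase.2 ⟨hne, hm⟩, hwm⟩
  · rintro ⟨hwl, hF⟩ C hC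
    by_cases hlC : l ∈ C
    · exact ⟨l, hlC, hwl⟩
    · obtain ⟨m, hm, hwm⟩ := hF _ (mem_assignTrue.2 ⟨C, hC, hlC, rfl⟩)
      exact ⟨m, Finset.mem_of_mem_erase hm, hwm⟩

theorem reduce_eq_empty {F : CNF V} {σ : V → Bool} (hF : F.SatisfiedBy (Lit.val σ)) :
    F.reduce σ = ∅ := by
  refine Finset.image_eq_empty.2 (Finset.filter_eq_empty_iff.2 fun C hC hfalse => ?_)
  obtain ⟨l, hl, hval⟩ := hF C hC
  simp [hfalse l hl] at hval

theorem reduce_eq_singleton_empty {F : CNF V} {σ : V → Bool} (hF : ¬ F.SatisfiedBy (Lit.val σ)) :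
    F.reduce σ = {∅} := by
  simp only [SatisfiedBy, not_forall, not_exists, not_and, Bool.not_eq_true] at hF
  obtain ⟨C, hC, hfalse⟩ := hF
  refine Finset.eq_singleton_iff_unique_mem.2 ⟨?_, fun D hD => ?_⟩
  · exact Finset.mem_image.2
      ⟨C, Finset.mem_filter.2 ⟨hC, hfalse⟩, Clause.reduce_eq_empty hfalse⟩
  · obtain ⟨E, hE, rfl⟩ := Finset.mem_image.1 hD
    exact Clause.reduce_eq_empty (Finset.mem_filter.1 hE).2

theorem reduce_eq_reduce_iff {F G : CNF V} {σ : V → Bool} :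
    F.reduce σ = G.reduce σ ↔ (F.SatisfiedBy (Lit.val σ) ↔ G.SatisfiedBy (Lit.val σ)) := by
  by_cases hF : F.SatisfiedBy (Lit.val σ) <;> by_cases hG : G.SatisfiedBy (Lit.val σ) <;>
    simp [hF, hG, reduce_eq_empty, reduce_eq_singleton_empty, (Finset.singleton_ne_empty _).symm]

theorem reduce_eq_reduce_map_iff {F : CNF V} {φ : Lit V → Lit V} {σ : V → Bool} :
    F.reduce σ = (F.map φ).reduce σ ↔
      (F.SatisfiedBy (Lit.val σ) ↔ F.SatisfiedBy (Lit.val σ ∘ φ)) := by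
  rw [reduce_eq_reduce_iff, satisfiedBy_map]

end CNF

section ExtendId

variable {S T : Finset (Lit V)} {φ : Lit V → Lit V} {l : Lit V}

theorem extendId_of_mem (hl : l ∈ S) : extendId S φ l = φ l :=
  if_pos hl

theorem extendId_of_notMem (hl : l ∉ S) : extendId S φ l = l :=
  if_neg hl

theorem extendId_extendId_of_subset (hST : S ⊆ T) :
    extendId T (extendId S φ) = extendId S φ := by
  funext l
  by_cases hl : l ∈ T
  · exact extendId_of_mem hl
  · rw [extendId_of_notMem hl, extendId_of_notMem fun hlS => hl (hST hlS)]

theorem bijOn_extendId (hφ : Set.BijOn φ S S) (hST : S ⊆ T) :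
    Set.BijOn (extendId S φ) T T := by
  have inside : Set.BijOn (extendId S φ) S S := hφ.congr fun _ hl => (extendId_of_mem hl).symm
  have outside : Set.BijOn (extendId S φ) (T \ S : Set (Lit V)) (T \ S) :=
    (Set.bijOn_id _).congr fun _ hl => (extendId_of_notMem hl.2).symm
  have injective : Set.InjOn (extendId S φ) (S ∪ T \ S : Set (Lit V)) :=
    (Set.injOn_union Set.disjoint_sdiff_right).2 ⟨inside.injOn, outside.injOn,
      fun _ hx _ hy hxy => (outside.mapsTo hy).2 (hxy ▸ inside.mapsTo hx)⟩
  simpa only [Set.union_sdiff_cancel (Finset.coe_subset.2 hST)] using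
    inside.union outside injective

end ExtendId

theorem extendId_negate {F : CNF V} {φ : Lit V → Lit V}
    (hφ : ∀ l ∈ F.lits, φ l.negate = (φ l).negate) (l : Lit V) :
    extendId F.lits φ l.negate = (extendId F.lits φ l).negate := by
  by_cases hl : l ∈ F.lits
  · rw [extendId_of_mem hl, extendId_of_mem (CNF.negate_mem_lits.2 hl), hφ l hl]
  · rw [extendId_of_notMem hl, extendId_of_notMem (CNF.negate_mem_lits.not.2 hl)]

theorem IsSemSym.satisfiedBy_comp_extendId_iff {F : CNF V} {φ : Lit V → Lit V}
    (hφ : IsSemSym F φ) (σ : V → Bool) :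
    F.SatisfiedBy (Lit.val σ) ↔ F.SatisfiedBy (Lit.val σ ∘ extendId F.lits φ) :=
  (CNF.reduce_eq_reduce_map_iff.1 (hφ.2.2 σ)).trans <|
    CNF.satisfiedBy_congr fun _ hl => by simp only [Function.comp_apply, extendId_of_mem hl]

/-- The paper's symmetry-lifting property for a transformation of `F` into `G`: the literals of `G`
are literals of `F`, and semantic symmetries of `G`, extended by the identity, are semantic
symmetries of `F`. -/
def LiftsSymmetries (F G : CNF V) : Prop :=
  G.lits ⊆ F.lits ∧ ∀ φ, IsSemSym G φ → IsSemSym F (extendId G.lits φ)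

namespace LiftsSymmetries

theorem of_satisfiedBy_iff {F G : CNF V} (hlits : G.lits ⊆ F.lits)
    (hsat : ∀ φ, IsSemSym G φ → ∀ σ,
      (F.SatisfiedBy (Lit.val σ) ↔ F.SatisfiedBy (Lit.val σ ∘ extendId G.lits φ))) :
    LiftsSymmetries F G :=
  ⟨hlits, fun φ hφ => ⟨bijOn_extendId hφ.1 hlits, fun l _ => extendId_negate hφ.2.1 l,
    fun σ => CNF.reduce_eq_reduce_map_iff.2 (hsat φ hφ σ)⟩⟩

theorem refl (F : CNF V) : LiftsSymmetries F F :=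
  of_satisfiedBy_iff subset_rfl fun _ hφ => hφ.satisfiedBy_comp_extendId_iff

theorem trans {F G H : CNF V} (hFG : LiftsSymmetries F G) (hGH : LiftsSymmetries G H) :
    LiftsSymmetries F H := by
  refine ⟨hGH.1.trans hFG.1, fun φ hφ => ?_⟩
  rw [← extendId_extendId_of_subset hGH.1]
  exact hFG.2 _ (hGH.2 φ hφ)

theorem of_singleton_mem {F : CNF V} {l : Lit V} (hl : {l} ∈ F) :
    LiftsSymmetries F (F.assignTrue l) := by
  refine of_satisfiedBy_iff (F.lits_assignTrue_subset l) fun φ hφ σ => ?_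
  have fix_l : extendId (F.assignTrue l).lits φ l = l :=
    extendId_of_notMem (F.notMem_lits_assignTrue l)
  have comp_negate : (Lit.val σ ∘ extendId (F.assignTrue l).lits φ) l.negate =
      !(Lit.val σ ∘ extendId (F.assignTrue l).lits φ) l := by
    simp only [Function.comp_apply, extendId_negate hφ.2.1, Lit.val_negate]
  rw [CNF.satisfiedBy_iff_of_singleton_mem hl (Lit.val_negate σ l),
    CNF.satisfiedBy_iff_of_singleton_mem hl comp_negate,
    ← hφ.satisfiedBy_comp_extendId_iff, Function.comp_apply, fix_l]

theorem of_empty_mem {F : CNF V} (hF : ∅ ∈ F) : LiftsSymmetries F {∅} := by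
  refine of_satisfiedBy_iff ?_ fun φ _ σ => ?_
  · rw [CNF.lits_singleton_empty]
    exact Finset.empty_subset _
  · exact iff_of_false (CNF.not_satisfiedBy_of_empty_mem hF _)
      (CNF.not_satisfiedBy_of_empty_mem hF _)

end LiftsSymmetries

theorem UCStep.liftsSymmetries {F G : CNF V} (h : UCStep F G) : LiftsSymmetries F G := by
  obtain ⟨-, ⟨l, hl, rfl⟩ | ⟨hF, rfl⟩⟩ := h
  · exact .of_singleton_mem hl
  · exact .of_empty_mem hF

theorem liftsSymmetries_of_reflTransGen_ucStep {F G : CNF V}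
    (h : Relation.ReflTransGen UCStep F G) : LiftsSymmetries F G := by
  induction h with
  | refl => exact .refl F
  | tail _ hstep ih => exact ih.trans hstep.liftsSymmetries

theorem exhaustive_unit_conflict_symmetry_lifting_general {F G : CNF V}
    (hsteps : Relation.ReflTransGen UCStep F G) {φ : Lit V → Lit V} (hφ : IsSemSym G φ) :
    IsSemSym F (extendId G.lits φ) :=
  (liftsSymmetries_of_reflTransGen_ucStep hsteps).2 φ hφ

/-- Exhaustive application of the unit and conflict rules is
symmetry-lifting: if `F*` is obtained from `F` by exhaustively applying unit
and conflict, then every semantic symmetry of `F*`, extended by the identity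
on `Lit(F) ∖ Lit(F*)`, is a semantic symmetry of `F`
(so `Aut_sem(F*)↑^{Lit(F)} ⊆ Aut_sem(F)`). -/
theorem exhaustive_unit_conflict_symmetry_lifting (F Fs : CNF V)
    (hsteps : Relation.ReflTransGen UCStep F Fs)
    (hdone : ∀ F' : CNF V, ¬ UCStep Fs F')
    (φ : Lit V → Lit V) (hφ : IsSemSym Fs φ) :
    IsSemSym F (extendId (CNF.lits Fs) φ) :=
  exhaustive_unit_conflict_symmetry_lifting_general hsteps hφ
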